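/- Let G=(V,E) be a finite weighted graph, k ≥ 1 a real number, and B ⊆ P ⊆ V with B nonempty. If e(P∖B, B) ≥ e(P∖B, V)/k, then φ(P) ≤ k·φ(B). -/

import Mathlib

open Finset

/-- Weighted degree of a vertex. -/
noncomputable def deg {V : Type*} [Fintype V] (w : V → V → ℝ) (v : V) : ℝ :=
  ∑ u, w v u

/-- Volume of a set of vertices. -/
noncomputable def vol {V : Type*} [Fintype V] (w : V → V → ℝ) (S : Finset V) : ℝ :=
  ∑ v ∈ S, deg w v

/-- Total weight of edges from `S` to `T \ S`. -/
noncomputable def eW {V : Type*} [DecidableEq V] (w : V → V → ℝ) (S T : Finset V) : ℝ :=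
  ∑ u ∈ S, ∑ v ∈ T \ S, w u v

/-- Conductance of `S` in `G`. -/
noncomputable def phi {V : Type*} [Fintype V] [DecidableEq V] (w : V → V → ℝ)
    (S : Finset V) : ℝ :=
  eW w S Finset.univ / vol w S

/-- Volume of `S ⊆ P` inside the induced subgraph `G[P]`. -/
noncomputable def volIn {V : Type*} [DecidableEq V] (w : V → V → ℝ) (P S : Finset V) : ℝ :=
  ∑ v ∈ S, ∑ u ∈ P, w v u

/-- `φ(G[P]) ≥ a` : every nonempty proper `S ⊊ P` with at most half of the induced volume
has induced conductance at least `a` (stated multiplicatively). -/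
def inCondGE {V : Type*} [DecidableEq V] (w : V → V → ℝ) (P : Finset V) (a : ℝ) : Prop :=
  ∀ S : Finset V, S ⊆ P → S.Nonempty → S ≠ P →
    volIn w P S ≤ volIn w P P / 2 → a * volIn w P S ≤ eW w S P

/-- `ρ(k)`: the minimum over families of `k` pairwise disjoint nonempty subsets of the
maximum conductance. -/
noncomputable def rho {V : Type*} [Fintype V] [DecidableEq V] (w : V → V → ℝ) (k : ℕ) : ℝ :=
  sInf { r | ∃ A : Fin k → Finset V, (∀ i, (A i).Nonempty) ∧
    (∀ i j, i ≠ j → Disjoint (A i) (A j)) ∧ r = ⨆ i, phi w (A i) }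

/-- The normalized Laplacian `I - D^{-1/2} A D^{-1/2}`. -/
noncomputable def normLap {V : Type*} [Fintype V] [DecidableEq V] (w : V → V → ℝ) : Matrix V V ℝ :=
  1 - Matrix.of fun u v => w u v / (Real.sqrt (deg w u) * Real.sqrt (deg w v))

/-- `lam w k` is the `k`-th smallest eigenvalue (1-indexed) of the normalized Laplacian. -/
noncomputable def lam {V : Type*} [Fintype V] [DecidableEq V] (w : V → V → ℝ) (k : ℕ) : ℝ :=
  if h : (normLap w).IsHermitian then
    ((Finset.univ.val.map h.eigenvalues).sort (· ≤ ·)).getD (k - 1) 0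
  else 0

/-!
Put `Q = P \ B`. Edges between `B` and `Q` lie inside `P`, so
`e(P, V) = e(B, V) + e(Q, V) - 2 e(B, Q)`. The hypothesis `e(Q, V) ≤ k e(B, Q)` and
`e(B, Q) ≤ e(B, V)` then give `e(P, V) ≤ e(B, V) + (k - 1) e(B, V) = k e(B, V)`; passing from
`vol B` to the larger `vol P` can only decrease the quotient.
-/

section EdgeWeight

variable {V : Type*} [DecidableEq V] {w : V → V → ℝ} {S T U : Finset V}

theorem eW_nonneg (hnonneg : ∀ u v, 0 ≤ w u v) (S T : Finset V) : 0 ≤ eW w S T :=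
  sum_nonneg fun u _ => sum_nonneg fun v _ => hnonneg u v

theorem eW_comm_of_disjoint (hsymm : ∀ u v, w u v = w v u) (hST : Disjoint S T) :
    eW w S T = eW w T S := by
  unfold eW
  rw [sdiff_eq_self_of_disjoint hST, sdiff_eq_self_of_disjoint hST.symm, sum_comm]
  simp only [hsymm]

theorem eW_sdiff_add_eW (w : V → V → ℝ) (S : Finset V) (hTU : T ⊆ U) :
    eW w S (U \ T) + eW w S T = eW w S U := by
  unfold eW
  rw [← sum_add_distrib]
  refine sum_congr rfl fun u _ => ?_
  rw [← sum_union (sdiff_disjoint.mono sdiff_subset sdiff_subset), ← union_sdiff_distrib,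
    sdiff_union_of_subset hTU]

theorem eW_mono_right (hnonneg : ∀ u v, 0 ≤ w u v) (S : Finset V) (hTU : T ⊆ U) :
    eW w S T ≤ eW w S U :=
  sum_le_sum fun u _ => sum_le_sum_of_subset_of_nonneg
    (sdiff_subset_sdiff hTU (Subset.refl S)) fun v _ _ => hnonneg u v

theorem eW_union_left (w : V → V → ℝ) (U : Finset V) (hST : Disjoint S T) :
    eW w (S ∪ T) U = eW w S (U \ T) + eW w T (U \ S) := by
  unfold eW
  rw [sum_union hST, sdiff_sdiff_left, sdiff_sdiff_left, sup_comm T S, sup_eq_union]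

theorem eW_union_left_add_two_mul (hsymm : ∀ u v, w u v = w v u) (hST : Disjoint S T)
    (hSU : S ⊆ U) (hTU : T ⊆ U) :
    eW w (S ∪ T) U + 2 * eW w S T = eW w S U + eW w T U := by
  rw [eW_union_left w U hST, ← eW_sdiff_add_eW w S hTU, ← eW_sdiff_add_eW w T hSU,
    eW_comm_of_disjoint hsymm hST.symm]
  ring

theorem eW_union_left_le_mul (hsymm : ∀ u v, w u v = w v u) (hnonneg : ∀ u v, 0 ≤ w u v)
    {k : ℝ} (hk : 1 ≤ k) (hST : Disjoint S T) (hSU : S ⊆ U) (hTU : T ⊆ U)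
    (h : eW w T U ≤ k * eW w T S) :
    eW w (S ∪ T) U ≤ k * eW w S U := by
  rw [eW_comm_of_disjoint hsymm hST.symm] at h
  have hST_nonneg : 0 ≤ eW w S T := eW_nonneg hnonneg S T
  calc
    eW w (S ∪ T) U = eW w S U + eW w T U - 2 * eW w S T :=
      eq_sub_of_add_eq (eW_union_left_add_two_mul hsymm hST hSU hTU)
    _ ≤ eW w S U + (k - 1) * eW w S T := by linarith
    _ ≤ eW w S U + (k - 1) * eW w S U := by
      gcongr
      exact eW_mono_right hnonneg S hTU
    _ = k * eW w S U := by ring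

end EdgeWeight

section Volume

variable {V : Type*} [Fintype V] {w : V → V → ℝ} {S T : Finset V}

theorem vol_pos (hS : S.Nonempty) (hdeg : ∀ v ∈ S, 0 < deg w v) : 0 < vol w S :=
  sum_pos hdeg hS

theorem vol_mono (hST : S ⊆ T) (hdeg : ∀ v ∈ T, 0 ≤ deg w v) : vol w S ≤ vol w T :=
  sum_le_sum_of_subset_of_nonneg hST fun v hv _ => hdeg v hv

end Volume

theorem stmt10 {V : Type*} [Fintype V] [DecidableEq V] (w : V → V → ℝ)
    (hsym : ∀ u v, w u v = w v u) (hnonneg : ∀ u v, 0 ≤ w u v)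
    (hdeg : ∀ v, 0 < deg w v)
    (k : ℝ) (hk : 1 ≤ k)
    (B P : Finset V) (hBP : B ⊆ P) (hBne : B.Nonempty)
    (h : eW w (P \ B) Finset.univ / k ≤ eW w (P \ B) B) :
    phi w P ≤ k * phi w B := by
  have hcut : eW w P univ ≤ k * eW w B univ := by
    have h' : eW w (P \ B) univ ≤ k * eW w (P \ B) B :=
      (div_le_iff₀' (zero_lt_one.trans_le hk)).1 h
    simpa only [union_sdiff_of_subset hBP] using
      eW_union_left_le_mul hsym hnonneg hk disjoint_sdiff (subset_univ _) (subset_univ _) h'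
  have hvol : vol w B ≤ vol w P := vol_mono hBP fun v _ => (hdeg v).le
  have hvol_pos : 0 < vol w B := vol_pos hBne fun v _ => hdeg v
  calc
    phi w P ≤ k * eW w B univ / vol w B :=
      div_le_div₀ ((eW_nonneg hnonneg P univ).trans hcut) hcut hvol_pos hvol
    _ = k * phi w B := mul_div_assoc _ _ _
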